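/- The transfer matrices form a commuting family: for all u, v ∈ ℂ with u ≠ 0 and v ≠ 0, T₁(u)T₁(v) = T₁(v)T₁(u), T₁(u)T₂(v) = T₂(v)T₁(u), and T₂(u)T₂(v) = T₂(v)T₂(u) in End(H). -/

import Mathlib

open Matrix Kronecker BigOperators

/-- Elementary 3×3 matrices `E i j`. -/
noncomputable def Eb (i j : Fin 3) : Matrix (Fin 3) (Fin 3) ℂ :=
  Matrix.single i j 1

/-- Principal gradation trigonometric R-matrix of `U_q(gl₃^)`, with spectral
parameter `λ = u³` parametrized by the cube root `u`. -/
noncomputable def RpM (q u : ℂ) : Matrix (Fin 3 × Fin 3) (Fin 3 × Fin 3) ℂ :=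
  (∑ k : Fin 3, ∑ p : Fin 3,
    if k = p then (u ^ 3 * q - (u ^ 3 * q)⁻¹) • (Eb k k ⊗ₖ Eb k k)
    else (u ^ 3 - (u ^ 3)⁻¹) • (Eb k k ⊗ₖ Eb p p))
  + (q - q⁻¹) • ∑ k : Fin 3, ∑ p : Fin 3,
      (if k < p then
        u ^ ((3 : ℤ) - 2 * (((p : ℕ) : ℤ) - ((k : ℕ) : ℤ))) • (Eb k p ⊗ₖ Eb p k)
        + u ^ (2 * (((p : ℕ) : ℤ) - ((k : ℕ) : ℤ)) - (3 : ℤ)) • (Eb p k ⊗ₖ Eb k p)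
      else 0)

/-- Index type of the quantum space `H = (ℂ³)^{⊗N}`. -/
abbrev HIdx (N : ℕ) := Fin N → Fin 3

/-- `R_{a,b}(u)`: the R-matrix acting on the auxiliary space and the `b`-th
factor of the quantum space, identity elsewhere. -/
noncomputable def Raux (N : ℕ) (q u : ℂ) (b : Fin N) :
    Matrix (Fin 3 × HIdx N) (Fin 3 × HIdx N) ℂ :=
  Matrix.of fun x y =>
    RpM q u (x.1, x.2 b) (y.1, y.2 b) * (if ∀ c, c ≠ b → x.2 c = y.2 c then 1 else 0)

/-- The twist matrix acting on the auxiliary space, identity on `H`. -/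
noncomputable def Kaux (N : ℕ) (K : Matrix (Fin 3) (Fin 3) ℂ) :
    Matrix (Fin 3 × HIdx N) (Fin 3 × HIdx N) ℂ :=
  Matrix.of fun x y => K x.1 y.1 * (if x.2 = y.2 then 1 else 0)

/-- Monodromy matrix `M(u) = K_a R_{a,N}(u/ζ_N) ⋯ R_{a,1}(u/ζ_1)`. -/
noncomputable def Mon (N : ℕ) (q : ℂ) (ζ : Fin N → ℂ) (K : Matrix (Fin 3) (Fin 3) ℂ)
    (u : ℂ) : Matrix (Fin 3 × HIdx N) (Fin 3 × HIdx N) ℂ :=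
  Kaux N K * (((List.finRange N).reverse.map fun b => Raux N q (u / ζ b) b).prod)

/-- Transfer matrix `T₁(u) = tr_a M(u)`. -/
noncomputable def T1 (N : ℕ) (q : ℂ) (ζ : Fin N → ℂ) (K : Matrix (Fin 3) (Fin 3) ℂ)
    (u : ℂ) : Matrix (HIdx N) (HIdx N) ℂ :=
  Matrix.of fun f g => ∑ i : Fin 3, Mon N q ζ K u (i, f) (i, g)

/-- The q-antisymmetric projector `P⁻ = R_q(p⁻¹)/(2(q⁻¹ − q))`. -/
noncomputable def Pm (q p : ℂ) : Matrix (Fin 3 × Fin 3) (Fin 3 × Fin 3) ℂ :=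
  (2 * (q⁻¹ - q))⁻¹ • RpM q p⁻¹

/-- Embedding of an operator on (auxiliary space a) ⊗ H into
(aux a) ⊗ (aux b) ⊗ H, identity on aux b. -/
noncomputable def embA (N : ℕ) (M : Matrix (Fin 3 × HIdx N) (Fin 3 × HIdx N) ℂ) :
    Matrix (Fin 3 × Fin 3 × HIdx N) (Fin 3 × Fin 3 × HIdx N) ℂ :=
  Matrix.of fun x y => M (x.1, x.2.2) (y.1, y.2.2) * (if x.2.1 = y.2.1 then 1 else 0)

/-- Embedding of an operator on (auxiliary space b) ⊗ H into
(aux a) ⊗ (aux b) ⊗ H, identity on aux a. -/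
noncomputable def embB (N : ℕ) (M : Matrix (Fin 3 × HIdx N) (Fin 3 × HIdx N) ℂ) :
    Matrix (Fin 3 × Fin 3 × HIdx N) (Fin 3 × Fin 3 × HIdx N) ℂ :=
  Matrix.of fun x y => M (x.2.1, x.2.2) (y.2.1, y.2.2) * (if x.1 = y.1 then 1 else 0)

/-- Embedding of an operator on (aux a) ⊗ (aux b) into (aux a) ⊗ (aux b) ⊗ H. -/
noncomputable def embP (N : ℕ) (P : Matrix (Fin 3 × Fin 3) (Fin 3 × Fin 3) ℂ) :
    Matrix (Fin 3 × Fin 3 × HIdx N) (Fin 3 × Fin 3 × HIdx N) ℂ :=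
  Matrix.of fun x y => P (x.1, x.2.1) (y.1, y.2.1) * (if x.2.2 = y.2.2 then 1 else 0)

/-- Fused transfer matrix `T₂(u) = tr_{ab}(P⁻_{ab} M_b(u) M_a(u/p))`. -/
noncomputable def T2 (N : ℕ) (q p : ℂ) (ζ : Fin N → ℂ) (K : Matrix (Fin 3) (Fin 3) ℂ)
    (u : ℂ) : Matrix (HIdx N) (HIdx N) ℂ :=
  Matrix.of fun f g => ∑ ia : Fin 3, ∑ ib : Fin 3,
    (embP N (Pm q p) * embB N (Mon N q ζ K u) * embA N (Mon N q ζ K (u / p)))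
      (ia, ib, f) (ia, ib, g)

/-!
All operators act on the sites of one tensor product, the auxiliary sites `α` and the quantum sites
`Fin N`. The Yang–Baxter equation, site by site, gives the exchange relation
`R_ab(u/v) M_a(u) M_b(v) = M_b(v) M_a(u) R_ab(u/v)`, and products of such relations give one for the
fused monodromy matrices, whose intertwiner `w` is compatible with the fusion projectors because
`P⁻` is itself proportional to an R-matrix. If `w` is invertible, then cyclicity of the partial
trace, together with `P⁻ M_b(u) M_a(u/p) P⁻ = M_b(u) M_a(u/p) P⁻`, makes the transfer matrices
commute. By unitarity `R_q(u)` is invertible for all but finitely many `u`, and the exceptional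
spectral parameters are reached by continuity in `u`.
-/

-- The right factor `E p` of `y * E p` can be inserted on the left as well, so that conjugating `y`
-- by `E w` amounts to conjugating it inside the image of the projector.
theorem trace_projector_mul_eq {A M F T : Type*} [Monoid A] [Monoid M] [FunLike F A M]
    [MonoidHomClass F A M] {E : F} {τ : M → T} (hτ : ∀ a x, τ (E a * x) = τ (x * E a))
    {p w w' : A} {x y y' : M} (hp : IsIdempotentElem p) (hw : IsUnit w) (hw' : IsUnit w')
    (hpw : SemiconjBy p w' w) (hy : SemiconjBy (E p) y' y) (hxy : SemiconjBy (E w) x y) :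
    τ (E p * x) = τ (E p * y) := by
  obtain ⟨w, rfl⟩ := hw
  obtain ⟨w', rfl⟩ := hw'
  have hx : x = E ↑w⁻¹ * y * E ↑w := by
    rw [mul_assoc, ← hxy.eq, ← mul_assoc, ← map_mul, w.inv_mul, map_one, one_mul]
  have hinv : p * (w'⁻¹).val = (w⁻¹).val * p := hpw.units_inv_right.eq
  have hyp : y * E p = E p * (y * E p) := by
    rw [← hy.eq, ← mul_assoc, ← map_mul, hp.eq]
  calc τ (E p * x)
      = τ (E ↑w⁻¹ * (y * E (w * p))) := by rw [hτ, hx, map_mul]; simp only [mul_assoc]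
    _ = τ (E ↑w⁻¹ * (y * E p * E w')) := by rw [← hpw.eq, map_mul, mul_assoc]
    _ = τ (E (↑w⁻¹ * p) * (y * E (p * w'))) := by rw [hyp, map_mul, map_mul]; simp only [mul_assoc]
    _ = τ (y * E (p * w' * (p * ↑w'⁻¹))) := by rw [← hinv, hτ, mul_assoc, ← map_mul]
    _ = τ (y * E p) := by
      rw [hpw.eq, mul_assoc, ← mul_assoc p, hp.eq, ← mul_assoc, ← hpw.eq, mul_assoc, w'.mul_inv,
        mul_one]
    _ = τ (E p * y) := (hτ p y).symm

section Embedding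

variable {ι κ ν d R : Type*} [Fintype ι] [DecidableEq ι] [Fintype κ] [DecidableEq κ]
  [Fintype ν] [DecidableEq ν] [Fintype d] [DecidableEq d] [CommSemiring R]

/-- Splits a basis vector of `d^{⊗ι}`, i.e. a map `ι → d`, into its part on the sites in the range
of `e` and its part on the other sites. -/
noncomputable def splitAlong (e : κ ↪ ι) : (ι → d) ≃ (κ → d) × ({c // c ∉ Set.range e} → d) :=
  open Classical in
  (Equiv.piEquivPiSubtypeProd (· ∈ Set.range e) fun _ => d).trans <|
    ((Equiv.ofInjective e e.injective).symm.arrowCongr (Equiv.refl d)).prodCongr (Equiv.refl _)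

open Classical in
/-- The algebra homomorphism sending an operator `X` on the sites `κ` to the operator on the sites
`ι` that acts as `X` on the range of `e` and as the identity on the other sites. -/
noncomputable def embedAlong (e : κ ↪ ι) :
    Matrix (κ → d) (κ → d) R →ₐ[R] Matrix (ι → d) (ι → d) R where
  toFun X := (X ⊗ₖ 1).submatrix (splitAlong e) (splitAlong e)
  map_one' := by rw [one_kronecker_one, submatrix_one_equiv]
  map_mul' X Y := by rw [submatrix_mul_equiv, ← mul_kronecker_mul, one_mul]
  map_zero' := by rw [zero_kronecker, submatrix_zero, Pi.zero_apply, Pi.zero_apply]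
  map_add' X Y := by rw [add_kronecker, submatrix_add]; rfl
  commutes' c := by
    rw [Algebra.algebraMap_eq_smul_one, smul_kronecker, one_kronecker_one, submatrix_smul,
      Pi.smul_apply, Pi.smul_apply, submatrix_one_equiv, Algebra.algebraMap_eq_smul_one]

theorem embedAlong_apply (e : κ ↪ ι) (X : Matrix (κ → d) (κ → d) R) (x y : ι → d)
    [Decidable (∀ c ∉ Set.range e, x c = y c)] :
    embedAlong e X x y = if ∀ c ∉ Set.range e, x c = y c then X (x ∘ e) (y ∘ e) else 0 := by
  classical
  have h : (splitAlong e x).2 = (splitAlong e y).2 ↔ ∀ c ∉ Set.range e, x c = y c :=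
    funext_iff.trans Subtype.forall
  change X (x ∘ e) (y ∘ e) *
    (1 : Matrix ({c // c ∉ Set.range e} → d) _ R) (splitAlong e x).2 (splitAlong e y).2 = _
  rw [one_apply, mul_ite, mul_one, mul_zero]
  exact if_congr h rfl rfl

theorem embedAlong_trans (e : κ ↪ ν) (f : ν ↪ ι) (X : Matrix (κ → d) (κ → d) R) :
    embedAlong (e.trans f) X = embedAlong f (embedAlong e X) := by
  classical
  ext x y
  simp only [embedAlong_apply, ← ite_and]
  refine if_congr ⟨fun h => ⟨fun c hc => h c ?_, fun c hc => h (f c) ?_⟩, ?_⟩ rfl rfl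
  · rintro ⟨k, rfl⟩; exact hc ⟨e k, rfl⟩
  · rintro ⟨k, hk⟩; exact hc ⟨k, f.injective hk⟩
  · rintro ⟨hf, he⟩ c hc
    by_cases hcf : c ∈ Set.range f
    · obtain ⟨n, rfl⟩ := hcf
      exact he n fun ⟨k, hk⟩ => hc ⟨k, congrArg f hk⟩
    · exact hf c hcf

theorem embedAlong_inl (X : Matrix (κ → d) (κ → d) R) :
    embedAlong (Function.Embedding.inl : κ ↪ κ ⊕ ν) X =
      (X ⊗ₖ (1 : Matrix (ν → d) (ν → d) R)).submatrix
        (Equiv.sumArrowEquivProdArrow κ ν d) (Equiv.sumArrowEquivProdArrow κ ν d) := by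
  classical
  ext x y
  refine (embedAlong_apply _ _ x y).trans ?_
  rw [submatrix_apply, kronecker_apply, one_apply, mul_ite, mul_one, mul_zero]
  exact if_congr (by simp [funext_iff]) rfl rfl

theorem embedAlong_inr (Y : Matrix (ν → d) (ν → d) R) :
    embedAlong (Function.Embedding.inr : ν ↪ κ ⊕ ν) Y =
      ((1 : Matrix (κ → d) (κ → d) R) ⊗ₖ Y).submatrix
        (Equiv.sumArrowEquivProdArrow κ ν d) (Equiv.sumArrowEquivProdArrow κ ν d) := by
  classical
  ext x y
  refine (embedAlong_apply _ _ x y).trans ?_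
  rw [submatrix_apply, kronecker_apply, one_apply, ite_mul, one_mul, zero_mul]
  exact if_congr (by simp [funext_iff]) rfl rfl

theorem commute_embedAlong {e : κ ↪ ι} {f : ν ↪ ι} (h : ∀ k n, e k ≠ f n)
    (X : Matrix (κ → d) (κ → d) R) (Y : Matrix (ν → d) (ν → d) R) :
    Commute (embedAlong e X) (embedAlong f Y) := by
  let g : κ ⊕ ν ↪ ι := ⟨Sum.elim e f, e.injective.sumElim f.injective h⟩
  have hX : embedAlong e X = embedAlong g (embedAlong .inl X) :=
    embedAlong_trans (.inl : κ ↪ κ ⊕ ν) g X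
  have hY : embedAlong f Y = embedAlong g (embedAlong .inr Y) :=
    embedAlong_trans (.inr : ν ↪ κ ⊕ ν) g Y
  rw [hX, hY]
  refine Commute.map (?_ : _ * _ = _ * _) (embedAlong g)
  rw [embedAlong_inl, embedAlong_inr, submatrix_mul_equiv, submatrix_mul_equiv,
    ← mul_kronecker_mul, ← mul_kronecker_mul, one_mul, mul_one, one_mul, mul_one]

/-- The operator acting as `X` on the site `i` and as the identity elsewhere. -/
noncomputable def onSite (i : ι) : Matrix d d R →ₐ[R] Matrix (ι → d) (ι → d) R :=
  (embedAlong (.punit i)).comp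
    (reindexAlgEquiv R R (Equiv.funUnique Unit d).symm).toAlgHom

/-- The operator acting as `X` on the sites `i` (first factor) and `j` (second factor) and as the
identity elsewhere. -/
noncomputable def onPair {i j : ι} (hij : i ≠ j) :
    Matrix (d × d) (d × d) R →ₐ[R] Matrix (ι → d) (ι → d) R :=
  (embedAlong (Function.Embedding.embFinTwo hij)).comp
    (reindexAlgEquiv R R (finTwoArrowEquiv d).symm).toAlgHom

theorem onSite_apply (i : ι) (X : Matrix d d R) (x y : ι → d) :
    onSite i X x y = if ∀ c, c ≠ i → x c = y c then X (x i) (y i) else 0 := by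
  classical
  refine (embedAlong_apply _ _ x y).trans (if_congr ?_ rfl rfl)
  simp [Function.Embedding.punit, eq_comm]

theorem onPair_apply {i j : ι} (hij : i ≠ j) (X : Matrix (d × d) (d × d) R) (x y : ι → d) :
    onPair hij X x y =
      if ∀ c, c ≠ i → c ≠ j → x c = y c then X (x i, x j) (y i, y j) else 0 := by
  classical
  refine (embedAlong_apply _ _ x y).trans (if_congr ?_ ?_ rfl)
  · simp [Function.Embedding.embFinTwo_apply_zero, Function.Embedding.embFinTwo_apply_one, eq_comm]
  · rfl

theorem embedAlong_onSite (e : κ ↪ ι) (i : κ) (X : Matrix d d R) :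
    embedAlong e (onSite i X) = onSite (e i) X :=
  (embedAlong_trans _ _ _).symm

theorem embedAlong_onPair (e : κ ↪ ι) {i j : κ} (hij : i ≠ j) (X : Matrix (d × d) (d × d) R) :
    embedAlong e (onPair hij X) = onPair (e.injective.ne hij) X := by
  refine (embedAlong_trans _ _ _).symm.trans ?_
  have : (Function.Embedding.embFinTwo hij).trans e =
      Function.Embedding.embFinTwo (e.injective.ne hij) := by
    ext k; fin_cases k <;> rfl
  rw [this]; rfl

theorem commute_onSite {i j : ι} (hij : i ≠ j) (X Y : Matrix d d R) :
    Commute (onSite i X) (onSite j Y) :=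
  commute_embedAlong (fun _ _ => hij) _ _

theorem commute_onPair_onSite {i j k : ι} (hij : i ≠ j) (hik : i ≠ k) (hjk : j ≠ k)
    (X : Matrix (d × d) (d × d) R) (Y : Matrix d d R) :
    Commute (onPair hij X) (onSite k Y) :=
  commute_embedAlong (fun s _ => by fin_cases s <;> simpa) _ _

theorem commute_onPair {i j k l : ι} (hij : i ≠ j) (hkl : k ≠ l) (hik : i ≠ k) (hil : i ≠ l)
    (hjk : j ≠ k) (hjl : j ≠ l) (X Y : Matrix (d × d) (d × d) R) :
    Commute (onPair hij X) (onPair hkl Y) :=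
  commute_embedAlong (fun s t => by fin_cases s <;> fin_cases t <;> simpa) _ _

theorem onPair_kronecker {i j : ι} (hij : i ≠ j) (X Y : Matrix d d R) :
    onPair hij (X ⊗ₖ Y) = onSite i X * onSite j Y := by
  have hX : onSite i X = onPair hij (X ⊗ₖ 1) := by
    ext x y
    rw [onSite_apply, onPair_apply, kronecker_apply, one_apply, mul_ite, mul_one, mul_zero,
      ← ite_and]
    exact if_congr ⟨fun h => ⟨fun c hi _ => h c hi, h j hij.symm⟩,
      fun h c hi => if hj : c = j then hj ▸ h.2 else h.1 c hi hj⟩ rfl rfl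
  have hY : onSite j Y = onPair hij (1 ⊗ₖ Y) := by
    ext x y
    rw [onSite_apply, onPair_apply, kronecker_apply, one_apply, ite_mul, one_mul, zero_mul,
      ← ite_and]
    exact if_congr ⟨fun h => ⟨fun c _ hj => h c hj, h i hij⟩,
      fun h c hj => if hi : c = i then hi ▸ h.2 else h.1 c hi hj⟩ rfl rfl
  rw [hX, hY, ← map_mul, ← mul_kronecker_mul, one_mul, mul_one]

end Embedding

section PartialTrace

variable {α α' β d R : Type*} [Fintype α] [DecidableEq α] [Fintype α'] [DecidableEq α']
  [Fintype β] [DecidableEq β] [Fintype d]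

theorem sum_sumArrow {M : Type*} [AddCommMonoid M] (F : (α ⊕ β → d) → M) :
    ∑ x, F x = ∑ a : α → d, ∑ f : β → d, F (Sum.elim a f) := by
  rw [← (Equiv.sumArrowEquivProdArrow α β d).symm.sum_comp, Fintype.sum_prod_type]
  rfl

variable [DecidableEq d] [CommSemiring R]

theorem embedAlong_inl_apply_elim (P : Matrix (α → d) (α → d) R) (a b : α → d) (f g : β → d) :
    embedAlong .inl P (Sum.elim a f) (Sum.elim b g) = if f = g then P a b else 0 := by
  classical
  refine (embedAlong_apply _ _ _ _).trans (if_congr ?_ rfl rfl)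
  simp [funext_iff]

/-- The auxiliary sites `α` and the quantum sites `β` among two families `α`, `α'` of auxiliary
sites sharing the quantum sites `β`. -/
abbrev leftSites (α α' β : Type*) : α ⊕ β ↪ (α ⊕ α') ⊕ β :=
  Function.Embedding.inl.sumMap (.refl β)

/-- The auxiliary sites `α'` and the quantum sites `β` among two families `α`, `α'` of auxiliary
sites sharing the quantum sites `β`. -/
abbrev rightSites (α α' β : Type*) : α' ⊕ β ↪ (α ⊕ α') ⊕ β :=
  Function.Embedding.inr.sumMap (.refl β)

theorem embedAlong_leftSites_apply_elim (X : Matrix (α ⊕ β → d) (α ⊕ β → d) R)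
    (a b : α → d) (a' b' : α' → d) (f g : β → d) :
    embedAlong (leftSites α α' β) X
        (Sum.elim (Sum.elim a a') f) (Sum.elim (Sum.elim b b') g) =
      if a' = b' then X (Sum.elim a f) (Sum.elim b g) else 0 := by
  classical
  refine (embedAlong_apply _ _ _ _).trans (if_congr ?_ ?_ rfl)
  · simp [funext_iff]
  · congr 1 <;> ext (_ | _) <;> rfl

theorem embedAlong_rightSites_apply_elim (X : Matrix (α' ⊕ β → d) (α' ⊕ β → d) R)
    (a b : α → d) (a' b' : α' → d) (f g : β → d) :
    embedAlong (rightSites α α' β) X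
        (Sum.elim (Sum.elim a a') f) (Sum.elim (Sum.elim b b') g) =
      if a = b then X (Sum.elim a' f) (Sum.elim b' g) else 0 := by
  classical
  refine (embedAlong_apply _ _ _ _).trans (if_congr ?_ ?_ rfl)
  · simp [funext_iff]
  · congr 1 <;> ext (_ | _) <;> rfl

/-- The trace over the auxiliary sites `α` of an operator on the sites `α ⊕ β`. -/
def partialTrace (X : Matrix (α ⊕ β → d) (α ⊕ β → d) R) : Matrix (β → d) (β → d) R :=
  Matrix.of fun f g => ∑ a : α → d, X (Sum.elim a f) (Sum.elim a g)

theorem partialTrace_mul_comm (P : Matrix (α → d) (α → d) R)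
    (X : Matrix (α ⊕ β → d) (α ⊕ β → d) R) :
    partialTrace (embedAlong .inl P * X) = partialTrace (X * embedAlong .inl P) := by
  ext f g
  simp only [partialTrace, of_apply, mul_apply, sum_sumArrow, embedAlong_inl_apply_elim, ite_mul,
    zero_mul, mul_ite, mul_zero, Finset.sum_ite_eq, Finset.sum_ite_eq', Finset.mem_univ, if_true]
  rw [Finset.sum_comm]
  simp only [mul_comm]

theorem partialTrace_mul_partialTrace (X : Matrix (α ⊕ β → d) (α ⊕ β → d) R)
    (Y : Matrix (α' ⊕ β → d) (α' ⊕ β → d) R) :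
    partialTrace X * partialTrace Y =
      partialTrace (embedAlong (leftSites α α' β) X *
        embedAlong (rightSites α α' β) Y) := by
  ext f g
  simp only [partialTrace, of_apply, mul_apply, sum_sumArrow, embedAlong_leftSites_apply_elim,
    embedAlong_rightSites_apply_elim, Finset.sum_mul_sum, ite_mul, mul_ite, zero_mul, mul_zero,
    Finset.sum_ite_irrel, Finset.sum_const_zero, Finset.sum_ite_eq, Finset.sum_ite_eq',
    Finset.mem_univ, if_true]
  rw [Finset.sum_comm]
  exact Finset.sum_congr rfl fun a _ => Finset.sum_comm

theorem partialTrace_embedAlong_sumMap (e : α ≃ α') (X : Matrix (α ⊕ β → d) (α ⊕ β → d) R) :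
    partialTrace (embedAlong (e.toEmbedding.sumMap (.refl β)) X) = partialTrace X := by
  classical
  ext f g
  have he (a : α → d) (h : β → d) :
      Sum.elim (e.arrowCongr (Equiv.refl d) a) h ∘ e.toEmbedding.sumMap (.refl β) =
        Sum.elim a h := by
    ext (_ | _) <;> simp
  rw [partialTrace, of_apply, ← (e.arrowCongr (Equiv.refl d)).sum_comp]
  refine Finset.sum_congr rfl fun a _ => (embedAlong_apply _ _ _ _).trans ?_
  rw [if_pos (by simp), he, he]

theorem partialTrace_mul_partialTrace_swap (X : Matrix (α ⊕ β → d) (α ⊕ β → d) R)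
    (Y : Matrix (α' ⊕ β → d) (α' ⊕ β → d) R) :
    partialTrace Y * partialTrace X =
      partialTrace (embedAlong (rightSites α α' β) Y *
        embedAlong (leftSites α α' β) X) := by
  rw [partialTrace_mul_partialTrace, ← partialTrace_embedAlong_sumMap (Equiv.sumComm α' α),
    map_mul, ← embedAlong_trans, ← embedAlong_trans]
  congr 4 <;> ext (_ | _) <;> rfl

theorem commute_partialTrace {P : Matrix (α → d) (α → d) R} {Q : Matrix (α' → d) (α' → d) R}
    {A A' : Matrix (α ⊕ β → d) (α ⊕ β → d) R} {B B' : Matrix (α' ⊕ β → d) (α' ⊕ β → d) R}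
    {w w' : Matrix (α ⊕ α' → d) (α ⊕ α' → d) R} (hP : IsIdempotentElem P)
    (hQ : IsIdempotentElem Q) (hA : SemiconjBy (embedAlong .inl P) A' A)
    (hB : SemiconjBy (embedAlong .inl Q) B' B) (hw : IsUnit w) (hw' : IsUnit w')
    (hPQ : SemiconjBy (embedAlong .inl P * embedAlong .inr Q) w' w)
    (hAB : SemiconjBy (embedAlong .inl w)
      (embedAlong (leftSites α α' β) A * embedAlong (rightSites α α' β) B)
      (embedAlong (rightSites α α' β) B * embedAlong (leftSites α α' β) A)) :
    Commute (partialTrace (embedAlong .inl P * A)) (partialTrace (embedAlong .inl Q * B)) := by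
  set P₁ := embedAlong (leftSites α α' β) (embedAlong .inl P) with hP₁
  set Q₂ := embedAlong (rightSites α α' β) (embedAlong .inl Q) with hQ₂
  have hP₁B (Y : Matrix (α' ⊕ β → d) (α' ⊕ β → d) R) :
      Commute P₁ (embedAlong (rightSites α α' β) Y) := by
    rw [hP₁, ← embedAlong_trans]
    exact commute_embedAlong (by rintro a (a' | b) <;> simp) _ _
  have hQ₂A (X : Matrix (α ⊕ β → d) (α ⊕ β → d) R) :
      Commute Q₂ (embedAlong (leftSites α α' β) X) := by
    rw [hQ₂, ← embedAlong_trans]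
    exact commute_embedAlong (by rintro a' (a | b) <;> simp) _ _
  have hPQ_inl : embedAlong .inl (embedAlong .inl P * embedAlong .inr Q) = P₁ * Q₂ := by
    rw [map_mul, hP₁, hQ₂]
    simp only [← embedAlong_trans]
    rfl
  have hidem : IsIdempotentElem (embedAlong .inl P * embedAlong .inr Q :
      Matrix (α ⊕ α' → d) _ R) :=
    (hP.map (embedAlong .inl)).mul_of_commute (commute_embedAlong (by simp) P Q)
      (hQ.map (embedAlong .inr))
  have hBA : SemiconjBy (P₁ * Q₂)
      (embedAlong (rightSites α α' β) B' * embedAlong (leftSites α α' β) A')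
      (embedAlong (rightSites α α' β) B * embedAlong (leftSites α α' β) A) :=
    .mul_right (.mul_left (hP₁B B) (hB.map (embedAlong (rightSites α α' β))))
      (.mul_left (hA.map (embedAlong (leftSites α α' β))) (hQ₂A A'))
  have htrace := trace_projector_mul_eq partialTrace_mul_comm hidem hw hw' hPQ (hPQ_inl ▸ hBA) hAB
  rw [hPQ_inl] at htrace
  rw [Commute, SemiconjBy, partialTrace_mul_partialTrace, partialTrace_mul_partialTrace_swap,
    map_mul, map_mul, (hQ₂A A).symm.mul_mul_mul_comm, htrace,
    (hP₁B B).symm.mul_mul_mul_comm, (hP₁B (embedAlong .inl Q)).eq]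

end PartialTrace

section Exchange

variable {M : Type*} [Monoid M] {r r' a a' b b' : M}

/-- The exchange (RTT) relation `r * (a * b) = (b * a) * r`. -/
def Exchange (r a b : M) : Prop :=
  SemiconjBy r (a * b) (b * a)

theorem Exchange.mul_mul (h : Exchange r a b) (h' : Exchange r a' b') (hba : Commute b a')
    (hab : Commute a b') : Exchange r (a * a') (b * b') := by
  have hmul := SemiconjBy.mul_right h h'
  rwa [hba.mul_mul_mul_comm, hab.mul_mul_mul_comm] at hmul

theorem Exchange.list_prod {σ : Type*} {f g : σ → M} {l : List σ} (hl : l.Nodup)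
    (h : ∀ s ∈ l, Exchange r (f s) (g s)) (hc : Pairwise fun s t => Commute (f s) (g t)) :
    Exchange r (l.map f).prod (l.map g).prod := by
  induction l with
  | nil => simp [Exchange]
  | cons s l ih =>
    obtain ⟨hs, hl⟩ := List.nodup_cons.1 hl
    rw [List.forall_mem_cons] at h
    have hne : ∀ t ∈ l, t ≠ s := fun t ht hts => hs (hts ▸ ht)
    rw [List.map_cons, List.map_cons, List.prod_cons, List.prod_cons]
    refine h.1.mul_mul (ih hl h.2) (.list_prod_right _ _ ?_) (.list_prod_right _ _ ?_)
    · exact List.forall_mem_map.2 fun t ht => (hc (hne t ht)).symm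
    · exact List.forall_mem_map.2 fun t ht => hc (hne t ht).symm

theorem Exchange.mul_left (h : Exchange r a b) (h' : Exchange r' a' b) (hr : Commute r a')
    (hr' : Commute r' a) : Exchange (r * r') (a * a') b := by
  have hr'ab : SemiconjBy r' (a * (a' * b)) (a * (b * a')) :=
    SemiconjBy.mul_right hr' h'
  have hrab : SemiconjBy r (a * b * a') (b * a * a') := SemiconjBy.mul_right h hr
  rw [Exchange, mul_assoc, ← mul_assoc b]
  exact hrab.mul_left (by rwa [mul_assoc a b])

theorem Exchange.mul_right (h : Exchange r a b) (h' : Exchange r' a b') (hr : Commute r b')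
    (hr' : Commute r' b) : Exchange (r' * r) a (b * b') := by
  have hrab : SemiconjBy r (a * b * b') (b * a * b') := SemiconjBy.mul_right h hr
  have hr'ab : SemiconjBy r' (b * (a * b')) (b * (b' * a)) :=
    SemiconjBy.mul_right hr' h'
  rw [Exchange, ← mul_assoc, mul_assoc b]
  exact hr'ab.mul_left (by rwa [← mul_assoc b])

end Exchange

section RMatrix

/-- The matrix entries of `RpM` that preserve the pair of basis vectors. -/
noncomputable def rDiag (q w : ℂ) (i j : Fin 3) : ℂ :=
  if i = j then w ^ 3 * q - (w ^ 3 * q)⁻¹ else w ^ 3 - (w ^ 3)⁻¹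

/-- The matrix entries of `RpM` that swap two distinct basis vectors. -/
noncomputable def rSwap (q w : ℂ) (i j : Fin 3) : ℂ :=
  if i < j then (q - q⁻¹) * w ^ ((3 : ℤ) - 2 * (((j : ℕ) : ℤ) - ((i : ℕ) : ℤ)))
  else if j < i then (q - q⁻¹) * w ^ (2 * (((i : ℕ) : ℤ) - ((j : ℕ) : ℤ)) - (3 : ℤ))
  else 0

theorem RpM_apply (q w : ℂ) (i j k l : Fin 3) :
    RpM q w (i, j) (k, l) =
      (if k = i ∧ l = j then rDiag q w i j else 0) +
        (if k = j ∧ l = i then rSwap q w i j else 0) := by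
  simp only [RpM, Eb, Matrix.add_apply, Matrix.smul_apply, Fin.sum_univ_three]
  fin_cases i <;> fin_cases j <;> fin_cases k <;> fin_cases l <;> simp [rDiag, rSwap]

variable {ι : Type*} [Fintype ι] [DecidableEq ι]

theorem onPair_RpM_mulVec {i j : ι} (hij : i ≠ j) (q w : ℂ) (F : (ι → Fin 3) → ℂ)
    (x : ι → Fin 3) :
    (onPair hij (RpM q w) *ᵥ F) x =
      rDiag q w (x i) (x j) * F x + rSwap q w (x i) (x j) * F (x ∘ Equiv.swap i j) := by
  have hext (y z : ι → Fin 3) :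
      y = z ↔ (∀ c, c ≠ i → c ≠ j → z c = y c) ∧ y i = z i ∧ y j = z j := by
    refine ⟨by rintro rfl; simp, fun ⟨h, hi, hj⟩ => funext fun c => ?_⟩
    rcases eq_or_ne c i with rfl | hci
    · exact hi
    · rcases eq_or_ne c j with rfl | hcj
      exacts [hj, (h c hci hcj).symm]
  have hentry (y : ι → Fin 3) : onPair hij (RpM q w) x y =
      (if y = x then rDiag q w (x i) (x j) else 0) +
        (if y = x ∘ Equiv.swap i j then rSwap q w (x i) (x j) else 0) := by
    have hswap : y = x ∘ Equiv.swap i j ↔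
        (∀ c, c ≠ i → c ≠ j → x c = y c) ∧ y i = x j ∧ y j = x i := by
      simp +contextual [hext y, Equiv.swap_apply_of_ne_of_ne]
    simp only [onPair_apply, RpM_apply, hext y x, hswap, ite_and]
    split_ifs <;> simp
  simp only [mulVec, dotProduct, hentry, add_mul, ite_mul, zero_mul, Finset.sum_add_distrib,
    Finset.sum_ite_eq', Finset.mem_univ, if_true]

theorem yangBaxter_fin_three {q s t : ℂ} (hq : q ≠ 0) (hs : s ≠ 0) (ht : t ≠ 0) :
    Exchange (onPair (by decide : (0 : Fin 3) ≠ 1) (RpM q s))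
      (onPair (by decide : (0 : Fin 3) ≠ 2) (RpM q (s * t)))
      (onPair (by decide : (1 : Fin 3) ≠ 2) (RpM q t)) := by
  rw [Exchange, SemiconjBy, mul_assoc]
  refine Matrix.mulVec_injective (funext₂ fun F x => ?_)
  obtain ⟨i, j, k, rfl⟩ : ∃ i j k, x = ![i, j, k] := ⟨x 0, x 1, x 2, List.ofFn_inj.1 rfl⟩
  have swap₀₁ (i j k : Fin 3) : ![i, j, k] ∘ Equiv.swap 0 1 = ![j, i, k] := List.ofFn_inj.1 rfl
  have swap₀₂ (i j k : Fin 3) : ![i, j, k] ∘ Equiv.swap 0 2 = ![k, j, i] := List.ofFn_inj.1 rfl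
  have swap₁₂ (i j k : Fin 3) : ![i, j, k] ∘ Equiv.swap 1 2 = ![i, k, j] := List.ofFn_inj.1 rfl
  simp only [← mulVec_mulVec, onPair_RpM_mulVec, swap₀₁, swap₀₂, swap₁₂, cons_val]
  fin_cases i <;> fin_cases j <;> fin_cases k <;>
    simp [rDiag, rSwap] <;> field_simp <;> ring

theorem yangBaxter {q s t : ℂ} (hq : q ≠ 0) (hs : s ≠ 0) (ht : t ≠ 0) {i j k : ι}
    (hij : i ≠ j) (hik : i ≠ k) (hjk : j ≠ k) :
    Exchange (onPair hij (RpM q s)) (onPair hik (RpM q (s * t))) (onPair hjk (RpM q t)) := by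
  let e : Fin 3 ↪ ι := ⟨![i, j, k], by
    intro a b; fin_cases a <;> fin_cases b <;> simp [hij, hik, hjk, hij.symm, hik.symm, hjk.symm]⟩
  have h := SemiconjBy.map (yangBaxter_fin_three hq hs ht) (embedAlong e)
  simp only [map_mul, embedAlong_onPair] at h
  exact h

theorem RpM_mulVec (q w : ℂ) (F : Fin 3 × Fin 3 → ℂ) (i j : Fin 3) :
    (RpM q w *ᵥ F) (i, j) = rDiag q w i j * F (i, j) + rSwap q w i j * F (j, i) := by
  simp only [mulVec, dotProduct, Fintype.sum_prod_type, RpM_apply, add_mul, ite_mul, zero_mul,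
    Finset.sum_add_distrib, ite_and, Finset.sum_ite_irrel, Finset.sum_const_zero,
    Finset.sum_ite_eq', Finset.mem_univ, if_true]

theorem RpM_unitarity {q w : ℂ} (hq : q ≠ 0) (hw : w ≠ 0) :
    RpM q w * (RpM q w⁻¹).submatrix Prod.swap Prod.swap =
      ((w ^ 3 * q - (w ^ 3 * q)⁻¹) * (q / w ^ 3 - w ^ 3 / q)) • 1 := by
  refine Matrix.mulVec_injective (funext₂ fun F ⟨i, j⟩ => ?_)
  have hswap : (RpM q w⁻¹).submatrix Prod.swap Prod.swap *ᵥ F =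
      (RpM q w⁻¹ *ᵥ (F ∘ Prod.swap)) ∘ Prod.swap :=
    submatrix_mulVec_equiv _ _ _ (Equiv.prodComm (Fin 3) (Fin 3))
  simp only [← mulVec_mulVec, hswap, RpM_mulVec, Function.comp_apply, Prod.swap_prod_mk,
    smul_mulVec, one_mulVec, Pi.smul_apply, smul_eq_mul]
  fin_cases i <;> fin_cases j <;> simp [rDiag, rSwap] <;> field_simp <;> ring

theorem isUnit_RpM {q w : ℂ} (hq : q ≠ 0) (hw : w ≠ 0) (h₁ : w ^ 6 ≠ (q ^ 2)⁻¹)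
    (h₂ : w ^ 6 ≠ q ^ 2) : IsUnit (RpM q w) := by
  have hc : (w ^ 3 * q - (w ^ 3 * q)⁻¹) * (q / w ^ 3 - w ^ 3 / q) ≠ 0 := by
    refine mul_ne_zero (fun h => h₁ ?_) fun h => h₂ ?_
    · field_simp at h ⊢
      linear_combination h
    · field_simp at h
      linear_combination -h
  refine .of_mul_eq_one (((w ^ 3 * q - (w ^ 3 * q)⁻¹) * (q / w ^ 3 - w ^ 3 / q))⁻¹ •
    (RpM q w⁻¹).submatrix Prod.swap Prod.swap) ?_
  rw [mul_smul_comm, RpM_unitarity hq hw, smul_smul, inv_mul_cancel₀ hc, one_smul]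

theorem RpM_inv_mul_self {p : ℂ} (hp : p ≠ 0) :
    RpM (p ^ 3) p⁻¹ * RpM (p ^ 3) p⁻¹ = (2 * ((p ^ 3)⁻¹ - p ^ 3)) • RpM (p ^ 3) p⁻¹ := by
  refine Matrix.mulVec_injective (funext₂ fun F ⟨i, j⟩ => ?_)
  simp only [← mulVec_mulVec, RpM_mulVec, smul_mulVec, Pi.smul_apply, smul_eq_mul]
  fin_cases i <;> fin_cases j <;> simp [rDiag, rSwap, hp] <;> field_simp <;> ring

theorem isIdempotentElem_Pm {q p : ℂ} (hq : q ≠ 0) (hq2 : q ^ 2 ≠ 1) (hp : p ^ 3 = q) :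
    IsIdempotentElem (Pm q p) := by
  have hp0 : p ≠ 0 := by rintro rfl; simp_all
  have hc : 2 * (q⁻¹ - q) ≠ 0 := by
    refine mul_ne_zero two_ne_zero fun h => hq2 ?_
    field_simp at h
    linear_combination -h
  subst hp
  rw [IsIdempotentElem, Pm, smul_mul_smul_comm, RpM_inv_mul_self hp0, smul_smul, mul_assoc,
    inv_mul_cancel₀ hc, mul_one]

theorem semiconjBy_Pm_right {q p s t : ℂ} (hq : q ≠ 0) (hs : s ≠ 0) (hst : s = p * t)
    {i j k : ι} (hij : i ≠ j) (hik : i ≠ k) (hjk : j ≠ k) :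
    SemiconjBy (onPair hjk (Pm q p)) (onPair hik (RpM q t) * onPair hij (RpM q s))
      (onPair hij (RpM q s) * onPair hik (RpM q t)) := by
  have hp : p ≠ 0 := left_ne_zero_of_mul (hst ▸ hs)
  have hYB := yangBaxter hq hs (inv_ne_zero hp) hij hik hjk
  rw [show s * p⁻¹ = t by rw [hst]; field_simp] at hYB
  rw [Pm, map_smul]
  refine .smul_left ?_ _
  rw [SemiconjBy, ← mul_assoc, mul_assoc (onPair hij _)]
  exact hYB.eq.symm

theorem semiconjBy_Pm_left {q p s t : ℂ} (hq : q ≠ 0) (ht : t ≠ 0) (hst : t = p * s)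
    {i j k : ι} (hij : i ≠ j) (hik : i ≠ k) (hjk : j ≠ k) :
    SemiconjBy (onPair hij (Pm q p)) (onPair hik (RpM q s) * onPair hjk (RpM q t))
      (onPair hjk (RpM q t) * onPair hik (RpM q s)) := by
  have hp : p ≠ 0 := left_ne_zero_of_mul (hst ▸ ht)
  have hYB := yangBaxter hq (inv_ne_zero hp) ht hij hik hjk
  rw [show p⁻¹ * t = s by rw [hst]; field_simp] at hYB
  rw [Pm, map_smul]
  exact hYB.smul_left _

theorem semiconjBy_Pm_mul_Pm {q p r s t : ℂ} (hq : q ≠ 0) (ht : t ≠ 0) (hrs : s = p * r)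
    (hst : t = p * s) {i j k l : ι} (hij : i ≠ j) (hik : i ≠ k) (hil : i ≠ l) (hjk : j ≠ k)
    (hjl : j ≠ l) (hkl : k ≠ l) :
    SemiconjBy (onPair hij (Pm q p) * onPair hkl (Pm q p))
      (onPair hil (RpM q r) * onPair hik (RpM q s) *
        (onPair hjl (RpM q s) * onPair hjk (RpM q t)))
      (onPair hjk (RpM q t) * onPair hjl (RpM q s) *
        (onPair hik (RpM q s) * onPair hil (RpM q r))) := by
  have hs : s ≠ 0 := right_ne_zero_of_mul (hst ▸ ht)
  have hkl_pair : SemiconjBy (onPair hkl (Pm q p)) _ _ :=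
    (semiconjBy_Pm_right hq hs hrs hik hil hkl).mul_right
      (semiconjBy_Pm_right hq ht hst hjk hjl hkl)
  have hij_pair : SemiconjBy (onPair hij (Pm q p)) _ _ :=
    (semiconjBy_Pm_left hq ht hst hij hik hjk).mul_right
      (semiconjBy_Pm_left hq hs hrs hij hil hjl)
  have hil_jk (X Y : Matrix (Fin 3 × Fin 3) (Fin 3 × Fin 3) ℂ) :
      Commute (onPair hil X) (onPair hjk Y) := commute_onPair _ _ hij hik hjl.symm hkl.symm X Y
  have hik_jl (X Y : Matrix (Fin 3 × Fin 3) (Fin 3 × Fin 3) ℂ) :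
      Commute (onPair hik X) (onPair hjl Y) := commute_onPair _ _ hij hil hjk.symm hkl X Y
  rw [(hil_jk _ _).mul_mul_mul_comm] at hkl_pair
  rw [(hik_jl _ _).mul_mul_mul_comm] at hij_pair
  exact hij_pair.mul_left hkl_pair

end RMatrix

section Monodromy

variable {N : ℕ} {α α' : Type*} [Fintype α] [DecidableEq α] [Fintype α'] [DecidableEq α']

/-- The monodromy matrix `M(u)` with auxiliary site `a`, as an operator on the auxiliary sites `α`
and the `N` quantum sites. -/
noncomputable def monodromy (q : ℂ) (ζ : Fin N → ℂ) (K : Matrix (Fin 3) (Fin 3) ℂ) (a : α)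
    (u : ℂ) : Matrix (α ⊕ Fin N → Fin 3) (α ⊕ Fin N → Fin 3) ℂ :=
  onSite (.inl a) K *
    ((List.finRange N).reverse.map fun b =>
      onPair (Sum.inl_ne_inr (a := a) (b := b)) (RpM q (u / ζ b))).prod

theorem embedAlong_monodromy (e : α ↪ α') (q : ℂ) (ζ : Fin N → ℂ) (K : Matrix (Fin 3) (Fin 3) ℂ)
    (a : α) (u : ℂ) :
    embedAlong (e.sumMap (.refl (Fin N))) (monodromy q ζ K a u) = monodromy q ζ K (e a) u := by
  rw [monodromy, map_mul, map_list_prod, List.map_map, embedAlong_onSite]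
  simp only [Function.comp_def, embedAlong_onPair]
  rfl

theorem exchange_onSite {q w : ℂ} {K : Matrix (Fin 3) (Fin 3) ℂ}
    (hK : RpM q w * (K ⊗ₖ K) = (K ⊗ₖ K) * RpM q w) {i j : α} (hij : i ≠ j) :
    Exchange (onPair hij (RpM q w)) (onSite i K) (onSite j K) := by
  rw [Exchange, (commute_onSite hij K K).symm.eq, ← onPair_kronecker hij]
  exact Commute.map hK (onPair hij)

theorem commute_onPair_monodromy {a b c : α} (hab : a ≠ b) (hac : a ≠ c) (hbc : b ≠ c)
    (X : Matrix (Fin 3 × Fin 3) (Fin 3 × Fin 3) ℂ) (q : ℂ) (ζ : Fin N → ℂ)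
    (K : Matrix (Fin 3) (Fin 3) ℂ) (u : ℂ) :
    Commute (onPair (Sum.inl_injective.ne hab) X) (monodromy q ζ K c u) :=
  (commute_onPair_onSite _ (by simpa) (by simpa) X K).mul_right <|
    .list_prod_right _ _ <| List.forall_mem_map.2 fun _ _ =>
      commute_onPair _ _ (by simpa) (by simp) (by simpa) (by simp) X _

variable {q p : ℂ} {ζ : Fin N → ℂ} {K : Matrix (Fin 3) (Fin 3) ℂ} {u v : ℂ}

theorem exchange_monodromy (hq : q ≠ 0) (hζ : ∀ b, ζ b ≠ 0)
    (hK : ∀ w ≠ 0, RpM q w * (K ⊗ₖ K) = (K ⊗ₖ K) * RpM q w) (hu : u ≠ 0) (hv : v ≠ 0)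
    {a b : α} (hab : a ≠ b) :
    Exchange (onPair (Sum.inl_injective.ne hab) (RpM q (u / v))) (monodromy q ζ K a u)
      (monodromy q ζ K b v) := by
  have hK_comm {i k : α} (h : i ≠ k) (w : ℂ) : Commute (onSite (.inl i) K)
      ((List.finRange N).reverse.map fun c =>
        onPair (Sum.inl_ne_inr (a := k) (b := c)) (RpM q (w / ζ c))).prod :=
    .list_prod_right _ _ <| List.forall_mem_map.2 fun c _ =>
      (commute_onPair_onSite _ (by simpa using h.symm) (by simp) _ _).symm
  refine (exchange_onSite (hK _ (div_ne_zero hu hv)) _).mul_mul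
    (.list_prod (List.nodup_reverse.2 (List.nodup_finRange N)) (fun c _ => ?_) fun c c' hc => ?_)
    (hK_comm hab.symm u) (hK_comm hab v)
  · have hYB := yangBaxter hq (div_ne_zero hu hv) (div_ne_zero hv (hζ c))
      (Sum.inl_injective.ne hab) (Sum.inl_ne_inr (b := c)) Sum.inl_ne_inr
    rwa [div_mul_div_cancel₀ hv] at hYB
  · exact commute_onPair _ _ (by simpa) (by simp) (by simp) (by simpa) _ _

theorem semiconjBy_Pm_monodromy (hq : q ≠ 0) (hp : p ≠ 0) (hζ : ∀ b, ζ b ≠ 0)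
    (hK : ∀ w ≠ 0, RpM q w * (K ⊗ₖ K) = (K ⊗ₖ K) * RpM q w) (hu : u ≠ 0)
    {a b : α} (hab : a ≠ b) :
    SemiconjBy (onPair (Sum.inl_injective.ne hab) (Pm q p))
      (monodromy q ζ K a (u / p) * monodromy q ζ K b u)
      (monodromy q ζ K b u * monodromy q ζ K a (u / p)) := by
  have h := exchange_monodromy hq hζ hK (div_ne_zero hu hp) hu hab
  rw [show u / p / u = p⁻¹ by field_simp] at h
  rw [Pm, map_smul]
  exact h.smul_left _

theorem exchange_monodromy_mul_monodromy (hq : q ≠ 0) (hp : p ≠ 0) (hζ : ∀ b, ζ b ≠ 0)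
    (hK : ∀ w ≠ 0, RpM q w * (K ⊗ₖ K) = (K ⊗ₖ K) * RpM q w) (hu : u ≠ 0) (hv : v ≠ 0)
    {a b c : α} (hab : a ≠ b) (hac : a ≠ c) (hbc : b ≠ c) :
    Exchange (onPair (Sum.inl_injective.ne hab) (RpM q (u / (v / p))) *
        onPair (Sum.inl_injective.ne hac) (RpM q (u / v)))
      (monodromy q ζ K a u) (monodromy q ζ K c v * monodromy q ζ K b (v / p)) :=
  .mul_right (exchange_monodromy hq hζ hK hu hv hac)
    (exchange_monodromy hq hζ hK hu (div_ne_zero hv hp) hab)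
    (commute_onPair_monodromy hac hab hbc.symm _ _ _ _ _)
    (commute_onPair_monodromy hab hac hbc _ _ _ _ _)

/-- The q-antisymmetric projector on the two auxiliary sites `a = 0` and `b = 1`. -/
noncomputable def fusionProjector (q p : ℂ) : Matrix (Fin 2 → Fin 3) (Fin 2 → Fin 3) ℂ :=
  onPair (zero_ne_one (α := Fin 2)) (Pm q p)

theorem isIdempotentElem_fusionProjector (hq : q ≠ 0) (hq2 : q ^ 2 ≠ 1) (hp : p ^ 3 = q) :
    IsIdempotentElem (fusionProjector q p) :=
  (isIdempotentElem_Pm hq hq2 hp).map (onPair (zero_ne_one (α := Fin 2)))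

theorem semiconjBy_fusionProjector (hq : q ≠ 0) (hp : p ≠ 0) (hζ : ∀ b, ζ b ≠ 0)
    (hK : ∀ w ≠ 0, RpM q w * (K ⊗ₖ K) = (K ⊗ₖ K) * RpM q w) (hu : u ≠ 0) :
    SemiconjBy (embedAlong .inl (fusionProjector q p))
      (monodromy q ζ K (0 : Fin 2) (u / p) * monodromy q ζ K 1 u)
      (monodromy q ζ K 1 u * monodromy q ζ K 0 (u / p)) := by
  rw [fusionProjector, embedAlong_onPair]
  exact semiconjBy_Pm_monodromy hq hp hζ hK hu zero_ne_one

/-- The transfer matrix `T₁(u)`, written on a single auxiliary site. -/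
noncomputable def transfer (q : ℂ) (ζ : Fin N → ℂ) (K : Matrix (Fin 3) (Fin 3) ℂ) (u : ℂ) :
    Matrix (Fin N → Fin 3) (Fin N → Fin 3) ℂ :=
  partialTrace (monodromy q ζ K () u)

/-- The fused transfer matrix `T₂(u)`, written on the auxiliary sites `a = 0` and `b = 1`. -/
noncomputable def fusedTransfer (q p : ℂ) (ζ : Fin N → ℂ) (K : Matrix (Fin 3) (Fin 3) ℂ) (u : ℂ) :
    Matrix (Fin N → Fin 3) (Fin N → Fin 3) ℂ :=
  partialTrace (embedAlong .inl (fusionProjector q p) *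
    (monodromy q ζ K 1 u * monodromy q ζ K 0 (u / p)))

theorem commute_transfer_transfer (hq : q ≠ 0) (hζ : ∀ b, ζ b ≠ 0)
    (hK : ∀ w ≠ 0, RpM q w * (K ⊗ₖ K) = (K ⊗ₖ K) * RpM q w) (hu : u ≠ 0) (hv : v ≠ 0)
    (hR : IsUnit (RpM q (u / v))) : Commute (transfer q ζ K u) (transfer q ζ K v) := by
  have hne : (.inl () : Unit ⊕ Unit) ≠ .inr () := Sum.inl_ne_inr
  have hw := hR.map (onPair hne)
  have hone {X : Matrix (Unit ⊕ Fin N → Fin 3) (Unit ⊕ Fin N → Fin 3) ℂ} :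
      SemiconjBy (embedAlong .inl (1 : Matrix (Unit → Fin 3) _ ℂ)) X X := by
    rw [map_one]; exact .one_left X
  have hcomm := commute_partialTrace .one .one (hone (X := monodromy q ζ K () u))
    (hone (X := monodromy q ζ K () v)) hw hw
    (by simp only [map_one, mul_one, SemiconjBy.one_left])
    (by
      simp only [embedAlong_monodromy, embedAlong_onPair]
      exact exchange_monodromy hq hζ hK hu hv hne)
  simpa only [transfer, map_one, one_mul] using hcomm

theorem commute_transfer_fusedTransfer (hq : q ≠ 0) (hq2 : q ^ 2 ≠ 1) (hp : p ^ 3 = q)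
    (hζ : ∀ b, ζ b ≠ 0) (hK : ∀ w ≠ 0, RpM q w * (K ⊗ₖ K) = (K ⊗ₖ K) * RpM q w) (hu : u ≠ 0)
    (hv : v ≠ 0) (hR : IsUnit (RpM q (u / v))) (hRp : IsUnit (RpM q (u / (v / p)))) :
    Commute (transfer q ζ K u) (fusedTransfer q p ζ K v) := by
  have hp0 : p ≠ 0 := by rintro rfl; simp_all
  have h₀ : (.inl () : Unit ⊕ Fin 2) ≠ .inr 0 := Sum.inl_ne_inr
  have h₁ : (.inl () : Unit ⊕ Fin 2) ≠ .inr 1 := Sum.inl_ne_inr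
  have h₀₁ : (.inr 0 : Unit ⊕ Fin 2) ≠ .inr 1 := by simp
  have hw₀ := hRp.map (onPair h₀)
  have hw₁ := hR.map (onPair h₁)
  have hcomm := commute_partialTrace (P := (1 : Matrix (Unit → Fin 3) _ ℂ))
    (A := monodromy q ζ K () u) .one
    (isIdempotentElem_fusionProjector hq hq2 hp) (by rw [map_one]; exact .one_left _)
    (semiconjBy_fusionProjector hq hp0 hζ hK hv) (hw₀.mul hw₁) (hw₁.mul hw₀)
    (by
      rw [map_one, one_mul, fusionProjector, embedAlong_onPair]
      exact semiconjBy_Pm_right hq (div_ne_zero hu (div_ne_zero hv hp0)) (by field_simp) h₀ h₁ h₀₁)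
    (by
      simp only [map_mul, embedAlong_monodromy, embedAlong_onPair]
      exact exchange_monodromy_mul_monodromy hq hp0 hζ hK hu hv h₀ h₁ h₀₁)
  simpa only [transfer, fusedTransfer, map_one, one_mul] using hcomm

theorem commute_fusedTransfer_fusedTransfer (hq : q ≠ 0) (hq2 : q ^ 2 ≠ 1) (hp : p ^ 3 = q)
    (hζ : ∀ b, ζ b ≠ 0) (hK : ∀ w ≠ 0, RpM q w * (K ⊗ₖ K) = (K ⊗ₖ K) * RpM q w) (hu : u ≠ 0)
    (hv : v ≠ 0) (hR : IsUnit (RpM q (u / v))) (hRp : IsUnit (RpM q (u / (v / p))))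
    (hRp' : IsUnit (RpM q (u / p / v))) :
    Commute (fusedTransfer q p ζ K u) (fusedTransfer q p ζ K v) := by
  have hp0 : p ≠ 0 := by rintro rfl; simp_all
  have hP := isIdempotentElem_fusionProjector hq hq2 hp
  have hab : (.inl 0 : Fin 2 ⊕ Fin 2) ≠ .inl 1 := by simp
  have hcd : (.inr 0 : Fin 2 ⊕ Fin 2) ≠ .inr 1 := by simp
  have hne (x y : Fin 2) : (.inl x : Fin 2 ⊕ Fin 2) ≠ .inr y := Sum.inl_ne_inr
  have hb := exchange_monodromy_mul_monodromy hq hp0 hζ hK hu hv (hne 1 0) (hne 1 1) hcd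
  have ha := exchange_monodromy_mul_monodromy hq hp0 hζ hK (div_ne_zero hu hp0) hv (hne 0 0)
    (hne 0 1) hcd
  have hexch := hb.mul_left ha
    ((commute_onPair_monodromy (hne 1 0) hab.symm (hne 0 0).symm _ _ _ _ _).mul_left
      (commute_onPair_monodromy (hne 1 1) hab.symm (hne 0 1).symm _ _ _ _ _))
    ((commute_onPair_monodromy (hne 0 0) hab (hne 1 0).symm _ _ _ _ _).mul_left
      (commute_onPair_monodromy (hne 0 1) hab (hne 1 1).symm _ _ _ _ _))
  rw [div_div_div_cancel_right₀ hp0] at hexch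
  have hw₀₀ := hR.map (onPair (hne 0 0))
  have hw₀₁ := hRp'.map (onPair (hne 0 1))
  have hw₁₀ := hRp.map (onPair (hne 1 0))
  have hw₁₁ := hR.map (onPair (hne 1 1))
  refine commute_partialTrace hP hP (semiconjBy_fusionProjector hq hp0 hζ hK hu)
    (semiconjBy_fusionProjector hq hp0 hζ hK hv) ((hw₁₀.mul hw₁₁).mul (hw₀₀.mul hw₀₁))
    ((hw₀₁.mul hw₀₀).mul (hw₁₁.mul hw₁₀)) ?_ ?_
  · rw [fusionProjector, embedAlong_onPair, embedAlong_onPair]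
    exact semiconjBy_Pm_mul_Pm hq (div_ne_zero hu (div_ne_zero hv hp0)) (by field_simp)
      (by field_simp) hab (hne 0 0) (hne 0 1) (hne 1 0) (hne 1 1) hcd
  · simp only [map_mul, embedAlong_monodromy, embedAlong_onPair]
    exact hexch

end Monodromy

section TransferMatrices

variable {N : ℕ}

/-- Identifies the basis of `ℂ³ ⊗ H` with the basis vectors on the sites `Unit ⊕ Fin N`. -/
def auxEquiv (N : ℕ) : (Unit ⊕ Fin N → Fin 3) ≃ Fin 3 × HIdx N :=
  (Equiv.sumArrowEquivProdArrow _ _ _).trans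
    ((Equiv.funUnique Unit (Fin 3)).prodCongr (Equiv.refl _))

/-- Identifies the basis of `ℂ³ ⊗ ℂ³ ⊗ H` with the basis vectors on the sites `Fin 2 ⊕ Fin N`. -/
def auxPairEquiv (N : ℕ) : (Fin 2 ⊕ Fin N → Fin 3) ≃ Fin 3 × Fin 3 × HIdx N :=
  (Equiv.sumArrowEquivProdArrow _ _ _).trans <|
    ((finTwoArrowEquiv (Fin 3)).prodCongr (Equiv.refl _)).trans (Equiv.prodAssoc _ _ _)

theorem auxEquiv_apply (x : Unit ⊕ Fin N → Fin 3) :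
    auxEquiv N x = (x (.inl ()), fun b => x (.inr b)) :=
  rfl

theorem auxPairEquiv_apply (x : Fin 2 ⊕ Fin N → Fin 3) :
    auxPairEquiv N x = (x (.inl 0), x (.inl 1), fun b => x (.inr b)) :=
  rfl

theorem submatrix_Kaux (K : Matrix (Fin 3) (Fin 3) ℂ) :
    (Kaux N K).submatrix (auxEquiv N) (auxEquiv N) = onSite (.inl ()) K := by
  ext x y
  rw [onSite_apply]
  simp [Kaux, auxEquiv_apply, funext_iff]

theorem submatrix_Raux (q u : ℂ) (b : Fin N) :
    (Raux N q u b).submatrix (auxEquiv N) (auxEquiv N) =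
      onPair (Sum.inl_ne_inr (a := ()) (b := b)) (RpM q u) := by
  ext x y
  rw [onPair_apply]
  simp [Raux, auxEquiv_apply]

theorem submatrix_Mon (q : ℂ) (ζ : Fin N → ℂ) (K : Matrix (Fin 3) (Fin 3) ℂ) (u : ℂ) :
    (Mon N q ζ K u).submatrix (auxEquiv N) (auxEquiv N) = monodromy q ζ K () u := by
  change reindexAlgEquiv ℂ ℂ (auxEquiv N).symm (Mon N q ζ K u) = _
  rw [Mon, map_mul, map_list_prod, List.map_map, monodromy, ← submatrix_Kaux]
  simp only [← submatrix_Raux]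
  rfl

theorem T1_eq_transfer (q : ℂ) (ζ : Fin N → ℂ) (K : Matrix (Fin 3) (Fin 3) ℂ) (u : ℂ) :
    T1 N q ζ K u = transfer q ζ K u := by
  ext f g
  rw [transfer, ← submatrix_Mon, partialTrace, of_apply,
    ← (Equiv.funUnique Unit (Fin 3)).symm.sum_comp]
  rfl

theorem submatrix_embP (P : Matrix (Fin 3 × Fin 3) (Fin 3 × Fin 3) ℂ) :
    (embP N P).submatrix (auxPairEquiv N) (auxPairEquiv N) =
      embedAlong .inl (onPair (zero_ne_one (α := Fin 2)) P) := by
  ext x y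
  rw [embedAlong_onPair, onPair_apply]
  simp [embP, auxPairEquiv_apply, funext_iff]

theorem submatrix_embA (X : Matrix (Fin 3 × HIdx N) (Fin 3 × HIdx N) ℂ) :
    (embA N X).submatrix (auxPairEquiv N) (auxPairEquiv N) =
      embedAlong ((Function.Embedding.punit (0 : Fin 2)).sumMap (.refl (Fin N)))
        (X.submatrix (auxEquiv N) (auxEquiv N)) := by
  classical
  ext x y
  rw [embedAlong_apply]
  simp [embA, auxPairEquiv_apply, auxEquiv_apply, Function.Embedding.punit]

theorem submatrix_embB (X : Matrix (Fin 3 × HIdx N) (Fin 3 × HIdx N) ℂ) :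
    (embB N X).submatrix (auxPairEquiv N) (auxPairEquiv N) =
      embedAlong ((Function.Embedding.punit (1 : Fin 2)).sumMap (.refl (Fin N)))
        (X.submatrix (auxEquiv N) (auxEquiv N)) := by
  classical
  ext x y
  rw [embedAlong_apply]
  simp [embB, auxPairEquiv_apply, auxEquiv_apply, Function.Embedding.punit]

theorem T2_eq_fusedTransfer (q p : ℂ) (ζ : Fin N → ℂ) (K : Matrix (Fin 3) (Fin 3) ℂ) (u : ℂ) :
    T2 N q p ζ K u = fusedTransfer q p ζ K u := by
  have hM (a : Fin 2) (w : ℂ) : monodromy q ζ K a w =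
      embedAlong ((Function.Embedding.punit a).sumMap (.refl (Fin N)))
        ((Mon N q ζ K w).submatrix (auxEquiv N) (auxEquiv N)) := by
    rw [submatrix_Mon, embedAlong_monodromy]; rfl
  ext f g
  rw [fusedTransfer, fusionProjector, hM, hM, ← submatrix_embP, ← submatrix_embA, ← submatrix_embB,
    submatrix_mul_equiv, submatrix_mul_equiv, ← mul_assoc, partialTrace, of_apply,
    ← (finTwoArrowEquiv (Fin 3)).symm.sum_comp, Fintype.sum_prod_type]
  rfl

end TransferMatrices

section Continuity

theorem continuousAt_rDiag {q w : ℂ} (hq : q ≠ 0) (hw : w ≠ 0) (i j : Fin 3) :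
    ContinuousAt (fun w => rDiag q w i j) w := by
  unfold rDiag
  split_ifs <;> fun_prop (disch := simp [hq, hw])

theorem continuousAt_rSwap (q : ℂ) {w : ℂ} (hw : w ≠ 0) (i j : Fin 3) :
    ContinuousAt (fun w => rSwap q w i j) w := by
  have hzpow (n : ℤ) : ContinuousAt (fun w : ℂ => w ^ n) w := continuousAt_zpow₀ _ _ (.inl hw)
  unfold rSwap
  split_ifs
  exacts [(hzpow _).const_mul _, (hzpow _).const_mul _, continuousAt_const]

theorem continuousAt_RpM {q w : ℂ} (hq : q ≠ 0) (hw : w ≠ 0) : ContinuousAt (RpM q) w := by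
  refine continuousAt_pi.2 fun ⟨i, j⟩ => continuousAt_pi.2 fun ⟨k, l⟩ => ?_
  simp only [RpM_apply]
  refine .add ?_ ?_
  · split_ifs
    exacts [continuousAt_rDiag hq hw i j, continuousAt_const]
  · split_ifs
    exacts [continuousAt_rSwap q hw i j, continuousAt_const]

theorem continuous_partialTrace {α β d R : Type*} [Fintype α] [DecidableEq α] [Fintype d]
    [CommSemiring R] [TopologicalSpace R] [ContinuousAdd R] :
    Continuous (partialTrace : Matrix (α ⊕ β → d) (α ⊕ β → d) R → Matrix (β → d) (β → d) R) :=
  continuous_matrix fun _ _ => continuous_finsetSum _ fun _ _ => continuous_id.matrix_elem _ _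

variable {N : ℕ} {q p u : ℂ} {ζ : Fin N → ℂ}

theorem continuousAt_monodromy {α : Type*} [Fintype α] [DecidableEq α] (hq : q ≠ 0)
    (hζ : ∀ b, ζ b ≠ 0) (K : Matrix (Fin 3) (Fin 3) ℂ) (a : α) (hu : u ≠ 0) :
    ContinuousAt (monodromy q ζ K a) u := by
  refine continuousAt_const.mul (tendsto_list_prod _ fun b _ => ?_)
  have hR : ContinuousAt (fun u => RpM q (u / ζ b)) u :=
    ContinuousAt.comp (f := fun u => u / ζ b)
      (continuousAt_RpM hq (div_ne_zero hu (hζ b))) (continuousAt_id.div_const _)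
  exact (onPair (R := ℂ) Sum.inl_ne_inr).toLinearMap.continuous_of_finiteDimensional.continuousAt
    |>.comp hR

theorem continuousAt_transfer (hq : q ≠ 0) (hζ : ∀ b, ζ b ≠ 0)
    (K : Matrix (Fin 3) (Fin 3) ℂ) (hu : u ≠ 0) : ContinuousAt (transfer q ζ K) u :=
  continuous_partialTrace.continuousAt.comp (continuousAt_monodromy hq hζ K () hu)

theorem continuousAt_fusedTransfer (hq : q ≠ 0) (hp : p ≠ 0) (hζ : ∀ b, ζ b ≠ 0)
    (K : Matrix (Fin 3) (Fin 3) ℂ) (hu : u ≠ 0) : ContinuousAt (fusedTransfer q p ζ K) u := by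
  have hM₀ : ContinuousAt (fun u => monodromy q ζ K (0 : Fin 2) (u / p)) u :=
    ContinuousAt.comp (f := fun u => u / p)
      (continuousAt_monodromy hq hζ K 0 (div_ne_zero hu hp)) (continuousAt_id.div_const _)
  exact continuous_partialTrace.continuousAt.comp
    (continuousAt_const.mul ((continuousAt_monodromy hq hζ K 1 hu).mul hM₀))

open Filter Topology

theorem eventually_isUnit_RpM {c : ℂ} (hq : q ≠ 0) (hc : c ≠ 0) (hu : u ≠ 0) :
    ∀ᶠ w in 𝓝[≠] u, IsUnit (RpM q (w / c)) := by
  have hne (k : ℂ) : ∀ᶠ w in 𝓝[≠] u, (w / c) ^ 6 ≠ k := by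
    refine nhdsNE_le_cofinite u <|
      (Polynomial.nthRoots 6 (k * c ^ 6)).toFinset.finite_toSet.subset fun w hw => ?_
    have hw6 : (w / c) ^ 6 = k := by simpa using hw
    simp only [Finset.mem_coe, Multiset.mem_toFinset]
    rw [Polynomial.mem_nthRoots (by norm_num), ← hw6, div_pow,
      div_mul_cancel₀ _ (pow_ne_zero _ hc)]
  filter_upwards [hne (q ^ 2)⁻¹, hne (q ^ 2), nhdsWithin_le_nhds (eventually_ne_nhds hu)]
    with w h₁ h₂ hw
  exact isUnit_RpM hq (div_ne_zero hw hc) h₁ h₂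

theorem commute_of_eventually_nhdsNE {X R : Type*} [TopologicalSpace X] [Mul R]
    [TopologicalSpace R] [ContinuousMul R] [T2Space R] {f : X → R} {x : X} [(𝓝[≠] x).NeBot]
    {b : R} (hf : ContinuousAt f x) (h : ∀ᶠ w in 𝓝[≠] x, Commute (f w) b) : Commute (f x) b :=
  (((hf.mul continuousAt_const).eventuallyEq_nhds_iff_eventuallyEq_nhdsNE
    (continuousAt_const.mul hf)).1 h).eq_of_nhds

end Continuity

/-- the transfer matrices form a commuting family. -/
theorem transfer_matrices_commute (N : ℕ) (hN : 1 ≤ N) (q p : ℂ)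
    (hq : q ≠ 0) (hq2 : q ^ 2 ≠ 1) (hp : p ^ 3 = q)
    (ζ : Fin N → ℂ) (hζ : ∀ b, ζ b ≠ 0) (K : Matrix (Fin 3) (Fin 3) ℂ)
    (hK : ∀ w : ℂ, w ≠ 0 → RpM q w * (K ⊗ₖ K) = (K ⊗ₖ K) * RpM q w)
    (u v : ℂ) (hu : u ≠ 0) (hv : v ≠ 0) :
    T1 N q ζ K u * T1 N q ζ K v = T1 N q ζ K v * T1 N q ζ K u
    ∧ T1 N q ζ K u * T2 N q p ζ K v = T2 N q p ζ K v * T1 N q ζ K u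
    ∧ T2 N q p ζ K u * T2 N q p ζ K v = T2 N q p ζ K v * T2 N q p ζ K u := by
  have hp0 : p ≠ 0 := by rintro rfl; simp_all
  have hne := nhdsWithin_le_nhds (s := {u}ᶜ) (eventually_ne_nhds hu)
  have hR := eventually_isUnit_RpM hq hv hu
  have hRp := eventually_isUnit_RpM hq (div_ne_zero hv hp0) hu
  have hRp' := eventually_isUnit_RpM hq (mul_ne_zero hp0 hv) hu
  simp only [T1_eq_transfer, T2_eq_fusedTransfer]
  refine ⟨commute_of_eventually_nhdsNE (continuousAt_transfer hq hζ K hu) ?_,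
    commute_of_eventually_nhdsNE (continuousAt_transfer hq hζ K hu) ?_,
    commute_of_eventually_nhdsNE (continuousAt_fusedTransfer hq hp0 hζ K hu) ?_⟩
  · filter_upwards [hne, hR] with w hw hRw
    exact commute_transfer_transfer hq hζ hK hw hv hRw
  · filter_upwards [hne, hR, hRp] with w hw hRw hRpw
    exact commute_transfer_fusedTransfer hq hq2 hp hζ hK hw hv hRw hRpw
  · filter_upwards [hne, hR, hRp, hRp'] with w hw hRw hRpw hRpw'
    exact commute_fusedTransfer_fusedTransfer hq hq2 hp hζ hK hw hv hRw hRpw (by rwa [div_div])
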